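/- Let p and q be primes with 2 < q < p, let d be the multiplicative order of 2 modulo q, and suppose p ≡ 2^m - 1 (mod q) for some m with 1 ≤ m < d. Then q divides 2^{d-m}(p+1) - 1, and the Cunningham chain of the first kind with base p has length at most d - m; that is, for every k such that 2^j(p+1) - 1 is prime for all 0 ≤ j < k, one has k ≤ d - m. -/

import Mathlib

/-!
Modulo `q` we have `2 ^ (d - m) * (p + 1) = 2 ^ (d - m) * 2 ^ m = 2 ^ d = 1`, so `q` divides the
term `2 ^ (d - m) * (p + 1) - 1` of the chain. That term is at least `p > q`, so it is composite.
-/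

theorem dvd_pow_sub_mul_succ_sub_one {a p q d m : ℕ} (ha : 0 < a) (hd : (a : ZMod q) ^ d = 1)
    (hmd : m ≤ d) (hcong : (p : ZMod q) = a ^ m - 1) : q ∣ a ^ (d - m) * (p + 1) - 1 := by
  have hpos : 1 ≤ a ^ (d - m) * (p + 1) := Nat.mul_pos (pow_pos ha _) p.succ_pos
  rw [← Nat.modEq_iff_dvd' hpos, ← ZMod.natCast_eq_natCast_iff]
  push_cast
  rw [hcong, sub_add_cancel, pow_sub_mul_pow _ hmd, hd]

theorem le_pow_mul_succ_sub_one {a : ℕ} (ha : 0 < a) (p e : ℕ) : p ≤ a ^ e * (p + 1) - 1 :=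
  Nat.le_sub_one_of_lt (Nat.le_mul_of_pos_left _ (pow_pos ha e))

theorem le_of_forall_lt_prime_of_dvd {c : ℕ → ℕ} {q e k : ℕ} (hq : q ≠ 1) (hdvd : q ∣ c e)
    (hne : q ≠ c e) (hprime : ∀ j < k, (c j).Prime) : k ≤ e :=
  not_lt.1 fun hek => Nat.not_prime_of_dvd_of_ne hdvd hq hne (hprime e hek)

theorem stmt_9_general {a p q d m : ℕ} (ha : 0 < a) (hq : q ≠ 1) (hqp : q < p)
    (hd : (a : ZMod q) ^ d = 1) (hmd : m ≤ d) (hcong : (p : ZMod q) = a ^ m - 1) :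
    q ∣ a ^ (d - m) * (p + 1) - 1 ∧
    ∀ k : ℕ, (∀ j < k, Nat.Prime (a ^ j * (p + 1) - 1)) → k ≤ d - m := by
  have hdvd := dvd_pow_sub_mul_succ_sub_one ha hd hmd hcong
  have hlt : q < a ^ (d - m) * (p + 1) - 1 := hqp.trans_le (le_pow_mul_succ_sub_one ha p _)
  exact ⟨hdvd, fun k => le_of_forall_lt_prime_of_dvd (c := fun j => a ^ j * (p + 1) - 1)
    hq hdvd hlt.ne⟩

/-- If `2 < q < p` are primes, `d` is the multiplicative order of `2` mod `q`, and
`p ≡ 2^m - 1 (mod q)` with `1 ≤ m < d`, then `q ∣ 2^(d-m)(p+1) - 1` and the Cunningham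
chain of the first kind with base `p` has length at most `d - m`. -/
theorem stmt_9 (p q : ℕ) (hp : p.Prime) (hq : q.Prime) (hq2 : 2 < q) (hqp : q < p)
    (d : ℕ) (hd : d = orderOf (2 : ZMod q))
    (m : ℕ) (hm1 : 1 ≤ m) (hmd : m < d) (hcong : (p : ZMod q) = 2 ^ m - 1) :
    q ∣ 2 ^ (d - m) * (p + 1) - 1 ∧
    ∀ k : ℕ, (∀ j < k, Nat.Prime (2 ^ j * (p + 1) - 1)) → k ≤ d - m :=
  stmt_9_general two_pos hq.ne_one hqp (by simp [hd, pow_orderOf_eq_one]) hmd.le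
    (by simpa using hcong)
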